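/- For k < 2n − 1, the natural inclusion SO(2n−1)/U(n−1) → SO(2n+1)/U(n) induces an isomorphism on homotopy groups π_k. -/

import Mathlib

noncomputable section

/-- The realification of a complex `k × k` matrix, as a real `(k·2) × (k·2)` matrix
(each complex entry `a + bi` becomes the `2 × 2` block `[[a, -b], [b, a]]`); this realizes
the standard inclusion `U(k) ⊂ SO(2k)`. -/
def realify {k : ℕ} (A : Matrix (Fin k) (Fin k) ℂ) :
    Matrix (Fin k × Fin 2) (Fin k × Fin 2) ℝ :=
  Matrix.of fun p q =>
    if p.2 = 0 then (if q.2 = 0 then (A p.1 q.1).re else -(A p.1 q.1).im)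
    else (if q.2 = 0 then (A p.1 q.1).im else (A p.1 q.1).re)

/-- The standard embedding of a complex `k × k` matrix as a real `(2k+1) × (2k+1)` matrix:
realify and add a `1 × 1` identity block; this realizes `U(k) ⊂ SO(2k+1)`. -/
def embedU (k : ℕ) (A : Matrix (Fin k) (Fin k) ℂ) :
    Matrix (Fin (2 * k + 1)) (Fin (2 * k + 1)) ℝ :=
  Matrix.reindex (finCongr (by omega)) (finCongr (by omega))
    (Matrix.reindex finSumFinEquiv finSumFinEquiv
      (Matrix.fromBlocks
        (Matrix.reindex finProdFinEquiv finProdFinEquiv (realify A)) 0 0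
        (1 : Matrix (Fin 1) (Fin 1) ℝ)))

/-- The block inclusion `Matrix (Fin r) (Fin r) ℝ → Matrix (Fin (r+2)) (Fin (r+2)) ℝ`,
adding a `2 × 2` identity block; this realizes `SO(2k+1) ⊂ SO(2k+3)`. -/
def blockIncl {r : ℕ} (M : Matrix (Fin r) (Fin r) ℝ) :
    Matrix (Fin (r + 2)) (Fin (r + 2)) ℝ :=
  Matrix.reindex finSumFinEquiv finSumFinEquiv
    (Matrix.fromBlocks M 0 0 (1 : Matrix (Fin 2) (Fin 2) ℝ))

/-- `SO(m)`: the subgroup of the orthogonal group `O(m, ℝ)` of matrices of determinant 1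
(the set in question is a subgroup, so taking `Subgroup.closure` does not enlarge it). -/
def SOgrp (m : ℕ) : Subgroup (Matrix.orthogonalGroup (Fin m) ℝ) :=
  Subgroup.closure {A | ((A : Matrix (Fin m) (Fin m) ℝ)).det = 1}

/-- The image of `U(k)` in `SO(2k+1)` under the standard inclusion (again the set in
question is a subgroup, so `Subgroup.closure` does not enlarge it). -/
def UinSO (k : ℕ) : Subgroup (SOgrp (2 * k + 1)) :=
  Subgroup.closure {B | ∃ A ∈ Matrix.unitaryGroup (Fin k) ℂ,
    (((B : ↥(Matrix.orthogonalGroup (Fin (2 * k + 1)) ℝ)) :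
      Matrix (Fin (2 * k + 1)) (Fin (2 * k + 1)) ℝ)) = embedU k A}

/-- The homogeneous space `SO(2k+1)/U(k)` with the quotient topology. -/
def SOmodU (k : ℕ) : Type :=
  (SOgrp (2 * k + 1)) ⧸ (UinSO k)

instance (k : ℕ) : TopologicalSpace (SOmodU k) :=
  inferInstanceAs (TopologicalSpace ((SOgrp (2 * k + 1)) ⧸ (UinSO k)))


section Realification

variable {k : ℕ}

theorem realify_mul (A B : Matrix (Fin k) (Fin k) ℂ) :
    realify (A * B) = realify A * realify B := by
  ext ⟨i, a⟩ ⟨j, b⟩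
  fin_cases a <;> fin_cases b <;>
    simp [realify, Matrix.mul_apply, Fintype.sum_prod_type, Complex.mul_re, Complex.mul_im,
      Finset.sum_add_distrib, sub_eq_add_neg, add_comm]

theorem realify_one : realify (1 : Matrix (Fin k) (Fin k) ℂ) = 1 := by
  ext ⟨i, a⟩ ⟨j, b⟩
  by_cases h : i = j <;> fin_cases a <;> fin_cases b <;> simp [realify, Matrix.one_apply, h]

theorem realify_star (A : Matrix (Fin k) (Fin k) ℂ) : realify (star A) = (realify A).transpose := by
  ext ⟨i, a⟩ ⟨j, b⟩
  fin_cases a <;> fin_cases b <;> simp [realify, Matrix.star_apply]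

theorem continuous_realify : Continuous (realify (k := k)) := by
  refine continuous_pi fun p => continuous_pi fun q => ?_
  simp only [realify, Matrix.of_apply]
  split_ifs <;> fun_prop

/-- Over `ℂ` the realification of `A` is similar to `A ⊕ conj A`. -/
theorem ofReal_det_realify (A : Matrix (Fin k) (Fin k) ℂ) :
    ((realify A).det : ℂ) = A.det * star A.det := by
  let q : Matrix (Fin 2) (Fin 2) ℂ := !![1, 1; -Complex.I, Complex.I]
  let Q : Matrix (Fin k × Fin 2) (Fin k × Fin 2) ℂ := Matrix.kronecker 1 q
  let D : Fin 2 → Matrix (Fin k) (Fin k) ℂ := ![A, A.map (starRingEnd ℂ)]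
  have hconj : (realify A).map Complex.ofRealHom * Q = Q * Matrix.blockDiagonal D := by
    ext ⟨i, a⟩ ⟨j, b⟩
    fin_cases a <;> fin_cases b <;>
      simp [Matrix.mul_apply, Fintype.sum_prod_type, Q, q, D, realify, Matrix.one_apply,
        Matrix.blockDiagonal_apply, Complex.ext_iff]
  have hQ : Q.det ≠ 0 := by
    simp only [Q, Matrix.kronecker, Matrix.det_kronecker, q, Matrix.det_fin_two_of]
    simp
  have hdet := congrArg Matrix.det hconj
  rw [Matrix.det_mul, Matrix.det_mul, mul_comm, Matrix.det_blockDiagonal] at hdet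
  have h := mul_left_cancel₀ hQ hdet
  rw [← RingHom.mapMatrix_apply, ← RingHom.map_det] at h
  rw [← Complex.ofRealHom_eq_coe, h]
  simp only [Fin.prod_univ_two, D, Matrix.cons_val_zero, Matrix.cons_val_one]
  rw [← RingHom.mapMatrix_apply, ← RingHom.map_det]
  simp

theorem det_realify_of_mem_unitaryGroup {A : Matrix (Fin k) (Fin k) ℂ}
    (hA : A ∈ Matrix.unitaryGroup (Fin k) ℂ) : (realify A).det = 1 := by
  have h := ofReal_det_realify A
  rw [(Matrix.det_of_mem_unitary hA).2] at h
  exact_mod_cast h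

end Realification

section SpecialOrthogonal

variable {n : ℕ}

theorem mem_SOgrp {A : Matrix.orthogonalGroup (Fin n) ℝ} :
    A ∈ SOgrp n ↔ (A : Matrix (Fin n) (Fin n) ℝ).det = 1 := by
  refine ⟨fun h => ?_, fun h => Subgroup.subset_closure h⟩
  refine Subgroup.closure_induction (p := fun (A : Matrix.orthogonalGroup (Fin n) ℝ) _ =>
       (A : Matrix (Fin n) (Fin n) ℝ).det = 1)
    (fun _ h => h) (by simp) (fun x y _ _ hx hy => by simp [hx, hy]) (fun x _ hx => ?_) h
  have hmul : (x : Matrix (Fin n) (Fin n) ℝ) * (x⁻¹ : Matrix.orthogonalGroup (Fin n) ℝ) = 1 :=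
    congrArg Subtype.val (mul_inv_cancel x)
  have hdet := congrArg Matrix.det hmul
  rwa [Matrix.det_mul, hx, one_mul, Matrix.det_one] at hdet

/-- The matrix underlying an element of `SO(n)`. -/
def soMatrix (g : SOgrp n) : Matrix (Fin n) (Fin n) ℝ :=
  (g : Matrix.orthogonalGroup (Fin n) ℝ)

theorem soMatrix_injective : Function.Injective (soMatrix (n := n)) :=
  Subtype.val_injective.comp Subtype.val_injective

theorem isEmbedding_soMatrix : Topology.IsEmbedding (soMatrix (n := n)) :=
  Topology.IsEmbedding.subtypeVal.comp Topology.IsEmbedding.subtypeVal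

@[fun_prop]
theorem continuous_soMatrix : Continuous (soMatrix (n := n)) :=
  isEmbedding_soMatrix.continuous

@[simp]
theorem soMatrix_mul (g h : SOgrp n) : soMatrix (g * h) = soMatrix g * soMatrix h := rfl

@[simp]
theorem soMatrix_one : soMatrix (1 : SOgrp n) = 1 := rfl

@[simp]
theorem soMatrix_inv (g : SOgrp n) : soMatrix g⁻¹ = (soMatrix g).transpose := rfl

theorem transpose_mul_soMatrix (g : SOgrp n) : (soMatrix g).transpose * soMatrix g = 1 :=
  congrArg soMatrix (inv_mul_cancel g)

theorem det_soMatrix (g : SOgrp n) : (soMatrix g).det = 1 := mem_SOgrp.1 g.2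

/-- An orthogonal matrix of determinant one, as an element of `SO(n)`. -/
def soOfMatrix (M : Matrix (Fin n) (Fin n) ℝ) (hM : M.transpose * M = 1) (hdet : M.det = 1) :
    SOgrp n :=
  ⟨⟨M, (Matrix.mem_orthogonalGroup_iff' _ _).2 hM⟩, mem_SOgrp.2 hdet⟩

instance : IsTopologicalGroup (SOgrp n) where
  continuous_mul := isEmbedding_soMatrix.continuous_iff.2 <| by
    change Continuous fun p : SOgrp n × SOgrp n => soMatrix p.1 * soMatrix p.2
    fun_prop
  continuous_inv := isEmbedding_soMatrix.continuous_iff.2 <| by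
    change Continuous fun g : SOgrp n => (soMatrix g).transpose
    fun_prop

theorem range_soMatrix :
    Set.range (soMatrix (n := n)) = {M | M.transpose * M = 1 ∧ M.det = 1} := by
  ext M
  constructor
  · rintro ⟨g, rfl⟩
    exact ⟨transpose_mul_soMatrix g, det_soMatrix g⟩
  · rintro ⟨hM, hdet⟩
    exact ⟨soOfMatrix M hM hdet, rfl⟩

instance : T2Space (SOgrp n) := isEmbedding_soMatrix.t2Space

theorem Matrix.isCompact_unitaryGroup (m : Type*) [Fintype m] [DecidableEq m] (𝕜 : Type*)
    [RCLike 𝕜] : IsCompact (Matrix.unitaryGroup m 𝕜 : Set (Matrix m m 𝕜)) := by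
  have hball : IsCompact (Set.univ.pi fun _ : m => Set.univ.pi fun _ : m =>
      Metric.closedBall (0 : 𝕜) 1) :=
    isCompact_univ_pi fun _ => isCompact_univ_pi fun _ => isCompact_closedBall _ _
  refine hball.of_isClosed_subset ?_ fun M hM i _ j _ => ?_
  · have : (Matrix.unitaryGroup m 𝕜 : Set (Matrix m m 𝕜)) = {M | M * star M = 1} :=
      Set.ext fun M => Matrix.mem_unitaryGroup_iff
    rw [this]
    exact isClosed_eq (by fun_prop) continuous_const
  · simpa using entry_norm_bound_of_unitary hM i j

instance : CompactSpace (SOgrp n) := by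
  refine (isEmbedding_soMatrix.isInducing.isCompact_iff (s := Set.univ)).2 ?_ |> fun h => ⟨h⟩
  rw [Set.image_univ, range_soMatrix]
  refine (Matrix.isCompact_unitaryGroup (Fin n) ℝ).of_isClosed_subset ?_ fun M hM => ?_
  · exact (isClosed_eq (by fun_prop) continuous_const).inter
      (isClosed_eq (by fun_prop) continuous_const)
  · refine Matrix.mem_unitaryGroup_iff'.2 ?_
    rw [Matrix.star_eq_conjTranspose, Matrix.conjTranspose_eq_transpose_of_trivial]
    exact hM.1

end SpecialOrthogonal

section BlockInclusions

variable {k r : ℕ}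

@[simp]
theorem blockIncl_castAdd_castAdd (M : Matrix (Fin r) (Fin r) ℝ) (i j : Fin r) :
    blockIncl M (Fin.castAdd 2 i) (Fin.castAdd 2 j) = M i j := by
  simp [blockIncl]

@[simp]
theorem blockIncl_castAdd_natAdd (M : Matrix (Fin r) (Fin r) ℝ) (i : Fin r) (b : Fin 2) :
    blockIncl M (Fin.castAdd 2 i) (Fin.natAdd r b) = 0 := by
  simp [blockIncl]

@[simp]
theorem blockIncl_natAdd_castAdd (M : Matrix (Fin r) (Fin r) ℝ) (a : Fin 2) (j : Fin r) :
    blockIncl M (Fin.natAdd r a) (Fin.castAdd 2 j) = 0 := by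
  simp [blockIncl]

@[simp]
theorem blockIncl_natAdd_natAdd (M : Matrix (Fin r) (Fin r) ℝ) (a b : Fin 2) :
    blockIncl M (Fin.natAdd r a) (Fin.natAdd r b) = (1 : Matrix (Fin 2) (Fin 2) ℝ) a b := by
  simp [blockIncl]

theorem blockIncl_injective : Function.Injective (blockIncl (r := r)) := fun M N h => by
  ext i j
  simpa using congrFun₂ h (Fin.castAdd 2 i) (Fin.castAdd 2 j)

theorem blockIncl_mul (M N : Matrix (Fin r) (Fin r) ℝ) :
    blockIncl (M * N) = blockIncl M * blockIncl N := by
  simp [blockIncl, Matrix.submatrix_mul_equiv, Matrix.fromBlocks_multiply]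

theorem blockIncl_one : blockIncl (1 : Matrix (Fin r) (Fin r) ℝ) = 1 := by
  simp [blockIncl, Matrix.fromBlocks_one]

theorem blockIncl_transpose (M : Matrix (Fin r) (Fin r) ℝ) :
    blockIncl M.transpose = (blockIncl M).transpose := by
  simp [blockIncl, Matrix.fromBlocks_transpose, Matrix.transpose_submatrix]

theorem det_blockIncl (M : Matrix (Fin r) (Fin r) ℝ) : (blockIncl M).det = M.det := by
  rw [blockIncl, Matrix.det_reindex_self, Matrix.det_fromBlocks_zero₂₁, Matrix.det_one, mul_one]

theorem continuous_blockIncl : Continuous (blockIncl (r := r)) := by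
  unfold blockIncl
  simp only [Matrix.reindex_apply]
  fun_prop

theorem blockIncl_mulVec_single (M : Matrix (Fin r) (Fin r) ℝ) (b : Fin 2) :
    (blockIncl M).mulVec (Pi.single (Fin.natAdd r b) 1) = Pi.single (Fin.natAdd r b) 1 := by
  rw [Matrix.mulVec_single_one]
  ext p
  refine Fin.addCases (fun i => ?_) (fun a => ?_) p
  · rw [Matrix.col_apply, blockIncl_castAdd_natAdd, Pi.single_eq_of_ne]
    simp only [ne_eq, Fin.ext_iff, Fin.val_castAdd, Fin.val_natAdd]
    omega
  · simp [Pi.single_apply, Matrix.one_apply]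

/-- A matrix whose last two rows and columns are those of the identity is in the image of
`blockIncl`. -/
theorem exists_eq_blockIncl (M : Matrix (Fin (r + 2)) (Fin (r + 2)) ℝ)
    (hcol : ∀ b, M.mulVec (Pi.single (Fin.natAdd r b) 1) = Pi.single (Fin.natAdd r b) 1)
    (hM : M.transpose * M = 1) :
    ∃ N : Matrix (Fin r) (Fin r) ℝ, M = blockIncl N := by
  have hrow : ∀ b, M.transpose.mulVec (Pi.single (Fin.natAdd r b) 1) =
      Pi.single (Fin.natAdd r b) 1 := fun b => by
    conv_lhs => rw [← hcol b, Matrix.mulVec_mulVec, hM, Matrix.one_mulVec]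
  have hcol' : ∀ p b, M p (Fin.natAdd r b) = (Pi.single (Fin.natAdd r b) 1 : Fin (r + 2) → ℝ) p :=
    fun p b => by simpa using congrFun (hcol b) p
  have hrow' : ∀ p b, M (Fin.natAdd r b) p = (Pi.single (Fin.natAdd r b) 1 : Fin (r + 2) → ℝ) p :=
    fun p b => by simpa using congrFun (hrow b) p
  have hne : ∀ (i : Fin r) (b : Fin 2), Fin.castAdd 2 i ≠ Fin.natAdd r b := fun i b => by
    simp only [ne_eq, Fin.ext_iff, Fin.val_castAdd, Fin.val_natAdd]
    omega
  refine ⟨M.submatrix (Fin.castAdd 2) (Fin.castAdd 2), ?_⟩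
  ext p q
  refine Fin.addCases (fun i => ?_) (fun a => ?_) p <;>
    refine Fin.addCases (fun j => ?_) (fun b => ?_) q
  · simp
  · rw [hcol', Pi.single_eq_of_ne (hne i b), blockIncl_castAdd_natAdd]
  · rw [hrow', Pi.single_eq_of_ne (hne j a), blockIncl_natAdd_castAdd]
  · rw [hcol']; simp [Pi.single_apply, Matrix.one_apply]

/-- The index equivalence underlying `embedU`. -/
def embedUIndex (k : ℕ) : (Fin k × Fin 2) ⊕ Fin 1 ≃ Fin (2 * k + 1) :=
  ((finProdFinEquiv.sumCongr (Equiv.refl (Fin 1))).trans finSumFinEquiv).trans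
    (finCongr (by omega))

theorem embedU_eq (A : Matrix (Fin k) (Fin k) ℂ) :
    embedU k A = Matrix.reindex (embedUIndex k) (embedUIndex k)
      (Matrix.fromBlocks (realify A) 0 0 1) := by
  ext p q
  obtain ⟨p, rfl⟩ := (embedUIndex k).surjective p
  obtain ⟨q, rfl⟩ := (embedUIndex k).surjective q
  rcases p with p | p <;> rcases q with q | q <;> simp [embedU, embedUIndex]

theorem embedU_apply (A : Matrix (Fin k) (Fin k) ℂ) (p q : (Fin k × Fin 2) ⊕ Fin 1) :
    embedU k A (embedUIndex k p) (embedUIndex k q) = Matrix.fromBlocks (realify A) 0 0 1 p q := by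
  simp [embedU_eq]

theorem embedU_mul (A B : Matrix (Fin k) (Fin k) ℂ) :
    embedU k (A * B) = embedU k A * embedU k B := by
  simp [embedU_eq, Matrix.submatrix_mul_equiv, Matrix.fromBlocks_multiply, realify_mul]

theorem embedU_one : embedU k 1 = 1 := by
  simp [embedU_eq, Matrix.fromBlocks_one, realify_one]

theorem embedU_star (A : Matrix (Fin k) (Fin k) ℂ) :
    embedU k (star A) = (embedU k A).transpose := by
  simp [embedU_eq, Matrix.fromBlocks_transpose, Matrix.transpose_submatrix, realify_star]

theorem continuous_embedU : Continuous (embedU k) := by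
  rw [funext (embedU_eq (k := k))]
  simp only [Matrix.reindex_apply]
  have := continuous_realify (k := k)
  fun_prop

theorem det_embedU_of_mem_unitaryGroup {A : Matrix (Fin k) (Fin k) ℂ}
    (hA : A ∈ Matrix.unitaryGroup (Fin k) ℂ) : (embedU k A).det = 1 := by
  rw [embedU_eq, Matrix.det_reindex_self, Matrix.det_fromBlocks_zero₂₁, Matrix.det_one, mul_one,
    det_realify_of_mem_unitaryGroup hA]

theorem transpose_mul_embedU {A : Matrix (Fin k) (Fin k) ℂ}
    (hA : A ∈ Matrix.unitaryGroup (Fin k) ℂ) : (embedU k A).transpose * embedU k A = 1 := by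
  rw [← embedU_star, ← embedU_mul, Matrix.mem_unitaryGroup_iff'.1 hA, embedU_one]

theorem mem_UinSO {B : SOgrp (2 * k + 1)} :
    B ∈ UinSO k ↔ ∃ A ∈ Matrix.unitaryGroup (Fin k) ℂ, soMatrix B = embedU k A := by
  refine ⟨fun h => ?_, fun h => Subgroup.subset_closure h⟩
  refine Subgroup.closure_induction (p := fun (B : SOgrp (2 * k + 1)) _ =>
    ∃ A ∈ Matrix.unitaryGroup (Fin k) ℂ, soMatrix B = embedU k A) (fun _ h => h)
    ⟨1, one_mem _, embedU_one.symm⟩ ?_ ?_ h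
  · rintro x y - - ⟨A, hA, hxA⟩ ⟨B, hB, hyB⟩
    exact ⟨A * B, mul_mem hA hB, by rw [soMatrix_mul, hxA, hyB, embedU_mul]⟩
  · rintro x - ⟨A, hA, hxA⟩
    exact ⟨star A, Unitary.star_mem hA, by rw [soMatrix_inv, hxA, embedU_star]⟩

theorem isClosed_UinSO : IsClosed (UinSO k : Set (SOgrp (2 * k + 1))) := by
  have : (UinSO k : Set (SOgrp (2 * k + 1))) =
      soMatrix ⁻¹' (embedU k '' Matrix.unitaryGroup (Fin k) ℂ) := by
    ext B
    simp only [SetLike.mem_coe, mem_UinSO, Set.mem_preimage, Set.mem_image, eq_comm]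
  rw [this]
  exact ((Matrix.isCompact_unitaryGroup (Fin k) ℂ).image continuous_embedU).isClosed.preimage
    continuous_soMatrix

theorem embedUIndex_succ_castSucc (i : Fin k) (a : Fin 2) :
    embedUIndex (k + 1) (Sum.inl (i.castSucc, a)) =
      Fin.castAdd 2 (embedUIndex k (Sum.inl (i, a))) := by
  ext; simp [embedUIndex]

theorem embedUIndex_succ_last_zero :
    embedUIndex (k + 1) (Sum.inl (Fin.last k, 0)) = Fin.castAdd 2 (embedUIndex k (Sum.inr 0)) := by
  ext; simp [embedUIndex, mul_comm]

theorem embedUIndex_succ_last_one :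
    embedUIndex (k + 1) (Sum.inl (Fin.last k, 1)) =
      (Fin.natAdd (2 * k + 1) (0 : Fin 2) : Fin (2 * k + 1 + 2)) := by
  ext; simp [embedUIndex, add_comm]

theorem embedUIndex_succ_inr :
    embedUIndex (k + 1) (Sum.inr 0) =
      (Fin.natAdd (2 * k + 1) (1 : Fin 2) : Fin (2 * k + 1 + 2)) := by
  ext; simp [embedUIndex]; omega

/-- The standard inclusion `U(k) ⊂ U(k+1)`, adding a `1 × 1` identity block. -/
def unitaryIncl (A : Matrix (Fin k) (Fin k) ℂ) : Matrix (Fin (k + 1)) (Fin (k + 1)) ℂ :=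
  Matrix.reindex finSumFinEquiv finSumFinEquiv
    (Matrix.fromBlocks A 0 0 (1 : Matrix (Fin 1) (Fin 1) ℂ))

@[simp]
theorem unitaryIncl_castSucc_castSucc (A : Matrix (Fin k) (Fin k) ℂ) (i j : Fin k) :
    unitaryIncl A i.castSucc j.castSucc = A i j := by
  change unitaryIncl A (Fin.castAdd 1 i) (Fin.castAdd 1 j) = _
  simp [unitaryIncl]

@[simp]
theorem unitaryIncl_castSucc_last (A : Matrix (Fin k) (Fin k) ℂ) (i : Fin k) :
    unitaryIncl A i.castSucc (Fin.last k) = 0 := by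
  change unitaryIncl A (Fin.castAdd 1 i) (Fin.natAdd k 0) = _
  simp [unitaryIncl]

@[simp]
theorem unitaryIncl_last_castSucc (A : Matrix (Fin k) (Fin k) ℂ) (j : Fin k) :
    unitaryIncl A (Fin.last k) j.castSucc = 0 := by
  change unitaryIncl A (Fin.natAdd k 0) (Fin.castAdd 1 j) = _
  simp [unitaryIncl]

@[simp]
theorem unitaryIncl_last_last (A : Matrix (Fin k) (Fin k) ℂ) :
    unitaryIncl A (Fin.last k) (Fin.last k) = 1 := by
  change unitaryIncl A (Fin.natAdd k 0) (Fin.natAdd k 0) = _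
  simp [unitaryIncl]

theorem unitaryIncl_injective : Function.Injective (unitaryIncl (k := k)) := fun A B h => by
  ext i j
  simpa using congrFun₂ h i.castSucc j.castSucc

theorem unitaryIncl_mem_unitaryGroup_iff {A : Matrix (Fin k) (Fin k) ℂ} :
    unitaryIncl A ∈ Matrix.unitaryGroup (Fin (k + 1)) ℂ ↔ A ∈ Matrix.unitaryGroup (Fin k) ℂ := by
  have hmul : star (unitaryIncl A) * unitaryIncl A = unitaryIncl (star A * A) := by
    simp [unitaryIncl, Matrix.submatrix_mul_equiv, Matrix.fromBlocks_multiply,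
      Matrix.star_eq_conjTranspose, Matrix.fromBlocks_conjTranspose]
  have hone : (1 : Matrix (Fin (k + 1)) (Fin (k + 1)) ℂ) = unitaryIncl 1 := by
    simp [unitaryIncl, Matrix.fromBlocks_one]
  rw [Matrix.mem_unitaryGroup_iff', Matrix.mem_unitaryGroup_iff', hmul, hone,
    unitaryIncl_injective.eq_iff]

theorem embedU_unitaryIncl (A : Matrix (Fin k) (Fin k) ℂ) :
    embedU (k + 1) (unitaryIncl A) = blockIncl (embedU k A) := by
  ext p q
  obtain ⟨p, rfl⟩ := (embedUIndex (k + 1)).surjective p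
  obtain ⟨q, rfl⟩ := (embedUIndex (k + 1)).surjective q
  rw [embedU_apply]
  rcases p with ⟨i, a⟩ | c <;> rcases q with ⟨j, b⟩ | d
  · refine Fin.lastCases ?_ (fun i => ?_) i <;> refine Fin.lastCases ?_ (fun j => ?_) j
    · fin_cases a <;> fin_cases b <;>
        simp [embedUIndex_succ_last_zero, embedUIndex_succ_last_one, embedU_apply, realify]
    · fin_cases a <;>
        simp [embedUIndex_succ_last_zero, embedUIndex_succ_last_one, embedUIndex_succ_castSucc,
          embedU_apply, realify]
    · fin_cases b <;>
        simp [embedUIndex_succ_last_zero, embedUIndex_succ_last_one, embedUIndex_succ_castSucc,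
          embedU_apply, realify]
    · simp [embedUIndex_succ_castSucc, embedU_apply, realify]
  · obtain rfl : d = 0 := Subsingleton.elim _ _
    refine Fin.lastCases ?_ (fun i => ?_) i
    · fin_cases a <;>
        simp [embedUIndex_succ_last_zero, embedUIndex_succ_last_one, embedUIndex_succ_inr]
    · simp [embedUIndex_succ_castSucc, embedUIndex_succ_inr]
  · obtain rfl : c = 0 := Subsingleton.elim _ _
    refine Fin.lastCases ?_ (fun j => ?_) j
    · fin_cases b <;>
        simp [embedUIndex_succ_last_zero, embedUIndex_succ_last_one, embedUIndex_succ_inr]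
    · simp [embedUIndex_succ_castSucc, embedUIndex_succ_inr]
  · obtain rfl : c = 0 := Subsingleton.elim _ _
    obtain rfl : d = 0 := Subsingleton.elim _ _
    simp [embedUIndex_succ_inr]

/-- `U(k+1) ∩ SO(2k+1) = U(k)` inside `SO(2k+3)`. -/
theorem exists_eq_embedU_of_blockIncl_eq {g : Matrix (Fin (2 * k + 1)) (Fin (2 * k + 1)) ℝ}
    {A : Matrix (Fin (k + 1)) (Fin (k + 1)) ℂ} (hA : A ∈ Matrix.unitaryGroup (Fin (k + 1)) ℂ)
    (h : blockIncl g = embedU (k + 1) A) :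
    ∃ B ∈ Matrix.unitaryGroup (Fin k) ℂ, g = embedU k B := by
  have hrealify : ∀ p q, realify A p q =
      blockIncl g (embedUIndex (k + 1) (Sum.inl p)) (embedUIndex (k + 1) (Sum.inl q)) :=
    fun p q => by rw [h, embedU_apply, Matrix.fromBlocks_apply₁₁]
  have hA_eq : A = unitaryIncl (A.submatrix Fin.castSucc Fin.castSucc) := by
    ext i j
    refine Fin.lastCases ?_ (fun i => ?_) i <;> refine Fin.lastCases ?_ (fun j => ?_) j
    · have h₁ := hrealify (Fin.last k, 1) (Fin.last k, 1)
      have h₂ := hrealify (Fin.last k, 0) (Fin.last k, 1)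
      simp [embedUIndex_succ_last_zero, embedUIndex_succ_last_one, realify] at h₁ h₂
      simp [Complex.ext_iff, h₁, h₂]
    · have h₁ := hrealify (Fin.last k, 1) (j.castSucc, 1)
      have h₂ := hrealify (Fin.last k, 1) (j.castSucc, 0)
      simp [embedUIndex_succ_castSucc, embedUIndex_succ_last_one, realify] at h₁ h₂
      simp [Complex.ext_iff, h₁, h₂]
    · have h₁ := hrealify (i.castSucc, 1) (Fin.last k, 1)
      have h₂ := hrealify (i.castSucc, 0) (Fin.last k, 1)
      simp [embedUIndex_succ_castSucc, embedUIndex_succ_last_one, realify] at h₁ h₂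
      simp [Complex.ext_iff, h₁, h₂]
    · simp
  refine ⟨_, unitaryIncl_mem_unitaryGroup_iff.1 (hA_eq ▸ hA), blockIncl_injective ?_⟩
  rw [h, ← embedU_unitaryIncl, ← hA_eq]

/-- `U(k+1)` acts transitively on the unit sphere of the `(2k+2)`-dimensional space
orthogonal to the last coordinate. -/
theorem exists_unitary_embedU_mulVec_eq
    (y : Fin (2 * k + 1 + 2) → ℝ) (hy : y ⬝ᵥ y = 1) (hlast : y (Fin.natAdd (2 * k + 1) 1) = 0) :
    ∃ A ∈ Matrix.unitaryGroup (Fin (k + 1)) ℂ,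
      (embedU (k + 1) A).mulVec (Pi.single (Fin.natAdd (2 * k + 1) (0 : Fin 2)) 1) = y := by
  let E := embedUIndex (k + 1)
  let c : EuclideanSpace ℂ (Fin (k + 1)) := WithLp.toLp 2 fun i =>
    ⟨y (E (Sum.inl (i, 1))), -y (E (Sum.inl (i, 0)))⟩
  have hlast' : y (E (Sum.inr 0)) = 0 := by rw [← hlast]; exact congrArg y embedUIndex_succ_inr
  have hc : ‖c‖ = 1 := by
    have hsum : y ⬝ᵥ y = ∑ p, y (E p) * y (E p) := (E.sum_comp fun i => y i * y i).symm
    rw [← sq_eq_sq₀ (norm_nonneg _) zero_le_one, EuclideanSpace.norm_sq_eq, one_pow, ← hy, hsum]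
    simp only [Fintype.sum_sum_type, Fintype.sum_prod_type, Fin.sum_univ_two, hlast',
      Finset.univ_unique, Finset.sum_singleton, Fin.default_eq_zero, mul_zero, add_zero]
    refine Finset.sum_congr rfl fun i _ => ?_
    rw [Complex.sq_norm, Complex.normSq_apply]
    simp only [c]
    ring
  obtain ⟨b, hb⟩ := Orthonormal.exists_orthonormalBasis_extension_of_card_eq (𝕜 := ℂ)
    (E := EuclideanSpace ℂ (Fin (k + 1))) (ι := Fin (k + 1)) (by simp) (v := fun _ => c)
    (s := {Fin.last k}) (by
      refine ⟨fun _ => hc, fun i j hij => (hij (Subsingleton.elim _ _)).elim⟩)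
  refine ⟨Matrix.of fun i j => b j i, ?_, ?_⟩
  · rw [Matrix.mem_unitaryGroup_iff']
    ext i j
    have := orthonormal_iff_ite.1 b.orthonormal i j
    rw [PiLp.inner_apply] at this
    simp only [Matrix.mul_apply, Matrix.star_apply, Matrix.of_apply, Matrix.one_apply, ← this]
    refine Finset.sum_congr rfl fun l _ => ?_
    simp [mul_comm]
  · ext p
    obtain ⟨p, rfl⟩ := E.surjective p
    have hb' := hb (Fin.last k) rfl
    rw [Matrix.mulVec_single_one, Matrix.col_apply, ← embedUIndex_succ_last_one, embedU_apply]
    rcases p with ⟨i, a⟩ | d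
    · fin_cases a <;> simp [realify, hb', c]
    · obtain rfl : d = 0 := Subsingleton.elim _ _
      simp [hlast']

/-- The last basis vector of `ℝ^(2k+1)`, which is fixed by `U(k)`. -/
def pole (k : ℕ) : Fin (2 * k + 1) → ℝ := Pi.single (Fin.last (2 * k)) 1

theorem embedU_mulVec_pole (A : Matrix (Fin k) (Fin k) ℂ) :
    (embedU k A).mulVec (pole k) = pole k := by
  have hlast : Fin.last (2 * k) = embedUIndex k (Sum.inr 0) := by
    ext; simp [embedUIndex, mul_comm]
  ext p
  obtain ⟨p, rfl⟩ := (embedUIndex k).surjective p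
  rw [pole, Matrix.mulVec_single_one, Matrix.col_apply, hlast, embedU_apply]
  rcases p with p | d
  · rw [Pi.single_eq_of_ne ((embedUIndex k).injective.ne Sum.inl_ne_inr), Matrix.fromBlocks_apply₁₂,
      Matrix.zero_apply]
  · obtain rfl : d = 0 := Subsingleton.elim _ _
    rw [Pi.single_eq_same, Matrix.fromBlocks_apply₂₂, Matrix.one_apply_eq]

/-- An element of `SO(2k+3)` fixing the last basis vector lies in `SO(2k+1) U(k+1)`. -/
theorem exists_blockIncl_eq_mul_embedU {M : Matrix (Fin (2 * k + 1 + 2)) (Fin (2 * k + 1 + 2)) ℝ}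
    (hM : M.transpose * M = 1)
    (hlast : M.mulVec (Pi.single (Fin.natAdd (2 * k + 1) 1) 1) =
      Pi.single (Fin.natAdd (2 * k + 1) 1) 1) :
    ∃ A ∈ Matrix.unitaryGroup (Fin (k + 1)) ℂ, ∃ N, M * embedU (k + 1) A = blockIncl N := by
  have hM' : M * M.transpose = 1 := mul_eq_one_comm.1 hM
  have hlast' : M.transpose.mulVec (Pi.single (Fin.natAdd (2 * k + 1) 1) 1) =
      Pi.single (Fin.natAdd (2 * k + 1) 1) 1 := by
    conv_lhs => rw [← hlast, Matrix.mulVec_mulVec, hM, Matrix.one_mulVec]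
  obtain ⟨A, hA, hAy⟩ := exists_unitary_embedU_mulVec_eq
    (M.transpose.mulVec (Pi.single (Fin.natAdd (2 * k + 1) (0 : Fin 2)) 1)) (by
      rw [Matrix.dotProduct_mulVec, Matrix.vecMul_transpose, Matrix.mulVec_mulVec, hM',
        Matrix.one_mulVec]
      simp) (by
      have := congrFun hlast (Fin.natAdd (2 * k + 1) 0)
      simpa using this)
  refine ⟨A, hA, exists_eq_blockIncl _ (fun b => ?_) ?_⟩
  · rw [← Matrix.mulVec_mulVec]
    fin_cases b
    · refine (congrArg M.mulVec hAy).trans ?_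
      rw [Matrix.mulVec_mulVec, hM', Matrix.one_mulVec]
      rfl
    · exact (congrArg M.mulVec (embedU_mulVec_pole A)).trans hlast
  · rw [Matrix.transpose_mul, Matrix.mul_assoc, ← Matrix.mul_assoc M.transpose, hM, Matrix.one_mul]
    exact transpose_mul_embedU hA

end BlockInclusions

section HomogeneousSpace

variable {k : ℕ}

instance : CompactSpace (SOmodU k) :=
  inferInstanceAs (CompactSpace (SOgrp (2 * k + 1) ⧸ UinSO k))

instance : SMul (SOgrp (2 * k + 1)) (SOmodU k) :=
  (MulAction.quotient (SOgrp (2 * k + 1)) (UinSO k)).toSMul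

instance : ContinuousSMul (SOgrp (2 * k + 1)) (SOmodU k) :=
  QuotientGroup.instContinuousSMul (N := UinSO k)

/-- The projection `SO(2k+1) → SO(2k+1)/U(k)`. -/
def SOmodU.mk (g : SOgrp (2 * k + 1)) : SOmodU k := QuotientGroup.mk g

theorem SOmodU.isOpenQuotientMap_mk : IsOpenQuotientMap (SOmodU.mk (k := k)) :=
  QuotientGroup.isOpenQuotientMap_mk

theorem SOmodU.smul_mk (g h : SOgrp (2 * k + 1)) : g • SOmodU.mk h = SOmodU.mk (g * h) := rfl

theorem SOmodU.one_smul_eq (x : SOmodU k) : (1 : SOgrp (2 * k + 1)) • x = x := by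
  obtain ⟨g, rfl⟩ := SOmodU.isOpenQuotientMap_mk.surjective x
  rw [SOmodU.smul_mk, one_mul]

theorem SOmodU.mk_eq_mk {g h : SOgrp (2 * k + 1)} :
    SOmodU.mk g = SOmodU.mk h ↔ g⁻¹ * h ∈ UinSO k := QuotientGroup.eq

instance : T2Space (SOmodU k) := by
  rw [t2Space_iff_of_isOpenQuotientMap SOmodU.isOpenQuotientMap_mk]
  simp only [SOmodU.mk_eq_mk]
  exact isClosed_UinSO.preimage (by fun_prop : Continuous
    fun q : SOgrp (2 * k + 1) × SOgrp (2 * k + 1) => q.1⁻¹ * q.2)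

/-- The projection `SO(2k+1)/U(k) → S^(2k)`, `[g] ↦ g e` for the last basis vector `e`. -/
def SOmodU.proj (x : SOmodU k) : Fin (2 * k + 1) → ℝ :=
  Quotient.liftOn' x (fun g => (soMatrix g).mulVec (pole k)) fun g h hgh => by
    obtain ⟨A, -, hA⟩ := mem_UinSO.1 (QuotientGroup.leftRel_apply.1 hgh)
    have : h = g * (g⁻¹ * h) := by group
    rw [this, soMatrix_mul, hA, ← Matrix.mulVec_mulVec, embedU_mulVec_pole]

theorem SOmodU.proj_mk (g : SOgrp (2 * k + 1)) :
    (SOmodU.mk g).proj = (soMatrix g).mulVec (pole k) := rfl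

theorem SOmodU.continuous_proj : Continuous (SOmodU.proj (k := k)) := by
  rw [← SOmodU.isOpenQuotientMap_mk.continuous_comp_iff]
  change Continuous fun g : SOgrp (2 * k + 1) => (soMatrix g).mulVec (pole k)
  fun_prop

theorem SOmodU.proj_smul (g : SOgrp (2 * k + 1)) (x : SOmodU k) :
    (g • x).proj = (soMatrix g).mulVec x.proj := by
  obtain ⟨h, rfl⟩ := SOmodU.isOpenQuotientMap_mk.surjective x
  rw [SOmodU.smul_mk, SOmodU.proj_mk, SOmodU.proj_mk, soMatrix_mul, Matrix.mulVec_mulVec]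

theorem SOmodU.proj_dotProduct_proj (x : SOmodU k) : x.proj ⬝ᵥ x.proj = 1 := by
  obtain ⟨g, rfl⟩ := SOmodU.isOpenQuotientMap_mk.surjective x
  rw [SOmodU.proj_mk, Matrix.dotProduct_mulVec, ← Matrix.mulVec_transpose, Matrix.mulVec_mulVec,
    transpose_mul_soMatrix, Matrix.one_mulVec]
  simp [pole]

/-- The block inclusion `SO(2k+1) ⊂ SO(2k+3)`. -/
def soIncl (g : SOgrp (2 * k + 1)) : SOgrp (2 * (k + 1) + 1) :=
  soOfMatrix (blockIncl (soMatrix g))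
    ((congrArg₂ _ (blockIncl_transpose _).symm rfl).trans <| (blockIncl_mul _ _).symm.trans <|
      (congrArg blockIncl (transpose_mul_soMatrix g)).trans blockIncl_one)
    ((det_blockIncl _).trans (det_soMatrix g))

theorem soMatrix_soIncl (g : SOgrp (2 * k + 1)) :
    soMatrix (soIncl g) = blockIncl (soMatrix g) := rfl

theorem soIncl_mul (g h : SOgrp (2 * k + 1)) : soIncl (g * h) = soIncl g * soIncl h :=
  soMatrix_injective (blockIncl_mul _ _)

theorem soIncl_one : soIncl (1 : SOgrp (2 * k + 1)) = 1 :=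
  soMatrix_injective blockIncl_one

theorem soIncl_inv (g : SOgrp (2 * k + 1)) : soIncl g⁻¹ = (soIncl g)⁻¹ :=
  soMatrix_injective (blockIncl_transpose _)

theorem continuous_soIncl : Continuous (soIncl (k := k)) :=
  isEmbedding_soMatrix.continuous_iff.2 (continuous_blockIncl.comp continuous_soMatrix)

theorem soIncl_mem_UinSO_iff {g : SOgrp (2 * k + 1)} : soIncl g ∈ UinSO (k + 1) ↔ g ∈ UinSO k := by
  rw [mem_UinSO, mem_UinSO]
  constructor
  · rintro ⟨A, hA, h⟩
    exact exists_eq_embedU_of_blockIncl_eq hA h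
  · rintro ⟨A, hA, h⟩
    refine ⟨unitaryIncl A, unitaryIncl_mem_unitaryGroup_iff.2 hA, ?_⟩
    rw [soMatrix_soIncl, h, embedU_unitaryIncl]

/-- The natural inclusion `SO(2k+1)/U(k) → SO(2k+3)/U(k+1)`. -/
def SOmodU.incl : C(SOmodU k, SOmodU (k + 1)) where
  toFun x := Quotient.liftOn' x (fun g => SOmodU.mk (soIncl g)) fun g h hgh => by
    rw [SOmodU.mk_eq_mk, ← soIncl_inv, ← soIncl_mul, soIncl_mem_UinSO_iff]
    exact QuotientGroup.leftRel_apply.1 hgh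
  continuous_toFun := SOmodU.isOpenQuotientMap_mk.continuous_comp_iff.1
    (SOmodU.isOpenQuotientMap_mk.continuous.comp continuous_soIncl)

theorem SOmodU.incl_mk (g : SOgrp (2 * k + 1)) :
    SOmodU.incl (SOmodU.mk g) = SOmodU.mk (soIncl g) := rfl

theorem SOmodU.incl_injective : Function.Injective (SOmodU.incl (k := k)) := fun x y h => by
  obtain ⟨g, rfl⟩ := SOmodU.isOpenQuotientMap_mk.surjective x
  obtain ⟨g', rfl⟩ := SOmodU.isOpenQuotientMap_mk.surjective y
  rwa [SOmodU.incl_mk, SOmodU.incl_mk, SOmodU.mk_eq_mk, ← soIncl_inv, ← soIncl_mul,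
    soIncl_mem_UinSO_iff, ← SOmodU.mk_eq_mk] at h

theorem SOmodU.isEmbedding_incl : Topology.IsEmbedding (SOmodU.incl (k := k)) :=
  (SOmodU.incl.continuous.isClosedEmbedding SOmodU.incl_injective).isEmbedding

theorem SOmodU.mem_range_incl_iff {x : SOmodU (k + 1)} :
    x ∈ Set.range (SOmodU.incl (k := k)) ↔ x.proj = pole (k + 1) := by
  have hpole : pole (k + 1) =
      (Pi.single (Fin.natAdd (2 * k + 1) (1 : Fin 2)) 1 : Fin (2 * k + 1 + 2) → ℝ) := rfl
  constructor
  · rintro ⟨y, rfl⟩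
    obtain ⟨g, rfl⟩ := SOmodU.isOpenQuotientMap_mk.surjective y
    rw [SOmodU.incl_mk, SOmodU.proj_mk, soMatrix_soIncl, hpole]
    exact blockIncl_mulVec_single _ _
  · intro hx
    obtain ⟨g, rfl⟩ := SOmodU.isOpenQuotientMap_mk.surjective x
    rw [SOmodU.proj_mk, hpole] at hx
    obtain ⟨A, hA, N, hN⟩ := exists_blockIncl_eq_mul_embedU (transpose_mul_soMatrix g) hx
    let a : SOgrp (2 * (k + 1) + 1) := soOfMatrix (embedU (k + 1) A) (transpose_mul_embedU hA)
      (det_embedU_of_mem_unitaryGroup hA)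
    have ha : soMatrix (g * a) = blockIncl N := hN
    have hN : N.transpose * N = 1 := blockIncl_injective <| by
      rw [blockIncl_mul, blockIncl_transpose, ← ha, blockIncl_one]
      exact transpose_mul_soMatrix _
    have hdet : N.det = 1 := by
      rw [← det_blockIncl, ← ha]
      exact det_soMatrix _
    refine ⟨SOmodU.mk (soOfMatrix N hN hdet), (SOmodU.mk_eq_mk.2 ?_).symm⟩
    have : soIncl (soOfMatrix N hN hdet) = g * a := soMatrix_injective ha.symm
    rw [this, inv_mul_cancel_left]
    exact mem_UinSO.2 ⟨A, hA, rfl⟩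

end HomogeneousSpace

section Rotations

variable {n : ℕ}

/-- The orthogonal reflection in the hyperplane perpendicular to `v`. -/
def hyperplaneReflection (v : Fin n → ℝ) : Matrix (Fin n) (Fin n) ℝ :=
  1 - (2 / (v ⬝ᵥ v)) • Matrix.vecMulVec v v

theorem hyperplaneReflection_mulVec (v y : Fin n → ℝ) :
    (hyperplaneReflection v).mulVec y = y - (2 * (v ⬝ᵥ y) / (v ⬝ᵥ v)) • v := by
  ext i
  simp [hyperplaneReflection, Matrix.sub_mulVec, Matrix.smul_mulVec, Matrix.vecMulVec_mulVec]
  ring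

theorem hyperplaneReflection_transpose (v : Fin n → ℝ) :
    (hyperplaneReflection v).transpose = hyperplaneReflection v := by
  simp [hyperplaneReflection, Matrix.transpose_vecMulVec]

theorem hyperplaneReflection_mul_self {v : Fin n → ℝ} (hv : v ≠ 0) :
    hyperplaneReflection v * hyperplaneReflection v = 1 := by
  have hv' : v ⬝ᵥ v ≠ 0 := fun h => hv (dotProduct_self_eq_zero.1 h)
  refine Matrix.ext_of_mulVec_single fun i => ?_
  rw [← Matrix.mulVec_mulVec, hyperplaneReflection_mulVec, hyperplaneReflection_mulVec,
    Matrix.one_mulVec, dotProduct_sub, dotProduct_smul]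
  ext j
  simp only [Pi.sub_apply, Pi.smul_apply, smul_eq_mul]
  field_simp
  ring

theorem hyperplaneReflection_smul {c : ℝ} (hc : c ≠ 0) (v : Fin n → ℝ) :
    hyperplaneReflection (c • v) = hyperplaneReflection v := by
  ext i j
  simp only [hyperplaneReflection, Matrix.sub_apply, Matrix.smul_apply, Matrix.vecMulVec_apply,
    Pi.smul_apply, smul_eq_mul, smul_dotProduct, dotProduct_smul]
  congr 1
  by_cases hv : v ⬝ᵥ v = 0
  · simp [hv]
  · field_simp

theorem det_hyperplaneReflection {v : Fin n → ℝ} (hv : v ≠ 0) :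
    (hyperplaneReflection v).det = -1 := by
  have hv' : v ⬝ᵥ v ≠ 0 := fun h => hv (dotProduct_self_eq_zero.1 h)
  have : hyperplaneReflection v = 1 + Matrix.replicateCol Unit (-(2 / (v ⬝ᵥ v)) • v) *
      Matrix.replicateRow Unit v := by
    rw [← Matrix.vecMulVec_eq, Matrix.smul_vecMulVec, neg_smul, ← sub_eq_add_neg]
    rfl
  rw [this, Matrix.det_one_add_replicateCol_mul_replicateRow, dotProduct_smul, smul_eq_mul]
  field_simp
  norm_num

/-- The rotation obtained by composing the reflections determined by `v` and `w`. -/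
def reflectionProduct (v w : Fin n → ℝ) (hv : v ≠ 0) (hw : w ≠ 0) : SOgrp n :=
  soOfMatrix (hyperplaneReflection v * hyperplaneReflection w)
    (by
      rw [Matrix.transpose_mul, hyperplaneReflection_transpose, hyperplaneReflection_transpose,
        Matrix.mul_assoc, ← Matrix.mul_assoc (hyperplaneReflection v),
        hyperplaneReflection_mul_self hv, Matrix.one_mul, hyperplaneReflection_mul_self hw])
    (by
      rw [Matrix.det_mul, det_hyperplaneReflection hv, det_hyperplaneReflection hw]
      norm_num)

theorem soMatrix_reflectionProduct (v w : Fin n → ℝ) (hv : v ≠ 0) (hw : w ≠ 0) :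
    soMatrix (reflectionProduct v w hv hw) =
      hyperplaneReflection v * hyperplaneReflection w := rfl

theorem reflectionProduct_mulVec {a b c : Fin n → ℝ} (ha : a ⬝ᵥ a = 1) (hb : b ⬝ᵥ b = 1)
    (hc : c ≠ 0) (ha₀ : a ≠ 0) (hab : c = a + b) :
    (soMatrix (reflectionProduct c a hc ha₀)).mulVec a = b := by
  subst hab
  have hab' : (a + b) ⬝ᵥ (a + b) ≠ 0 := fun h => hc (dotProduct_self_eq_zero.1 h)
  have hcomm : b ⬝ᵥ a = a ⬝ᵥ b := dotProduct_comm _ _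
  rw [soMatrix_reflectionProduct, ← Matrix.mulVec_mulVec, hyperplaneReflection_mulVec,
    hyperplaneReflection_mulVec, ha]
  simp only [add_dotProduct, dotProduct_add, dotProduct_sub, dotProduct_smul, ha, hb, hcomm,
    smul_eq_mul] at hab' ⊢
  have hcoef : 2 * (1 + a ⬝ᵥ b - 2 * 1 / 1 * (1 + a ⬝ᵥ b)) /
      (1 + a ⬝ᵥ b + (a ⬝ᵥ b + 1)) = -1 := by
    rw [div_eq_iff hab']; ring
  rw [hcoef]
  ext i
  simp only [Pi.sub_apply, Pi.smul_apply, Pi.add_apply, smul_eq_mul]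
  ring

theorem reflectionProduct_eq_one {c : ℝ} (hc : c ≠ 0) {u v : Fin n → ℝ} (hu : u ≠ 0)
    (hv : v ≠ 0) (huv : u = c • v) : reflectionProduct u v hu hv = 1 := by
  subst huv
  exact soMatrix_injective <| by
    rw [soMatrix_reflectionProduct, hyperplaneReflection_smul hc, hyperplaneReflection_mul_self hv,
      soMatrix_one]

theorem continuous_reflectionProduct {X : Type*} [TopologicalSpace X] {v w : X → Fin n → ℝ}
    (hv : Continuous v) (hw : Continuous w) (hv₀ : ∀ x, v x ≠ 0) (hw₀ : ∀ x, w x ≠ 0) :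
    Continuous fun x => reflectionProduct (v x) (w x) (hv₀ x) (hw₀ x) := by
  have hrefl : ∀ u : X → Fin n → ℝ, Continuous u → (∀ x, u x ≠ 0) →
      Continuous fun x => hyperplaneReflection (u x) := fun u hu hu₀ => by
    refine continuous_const.sub ((continuous_const.div (by fun_prop) fun x h =>
      hu₀ x (dotProduct_self_eq_zero.1 h)).smul ?_)
    exact hu.matrix_vecMulVec hu
  exact isEmbedding_soMatrix.continuous_iff.2 ((hrefl v hv hv₀).mul (hrefl w hw hw₀))

end Rotations

section Pushing

open unitInterval

variable {k : ℕ} {X : Type*} [TopologicalSpace X]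

/-- A map `v` into `SO(2k+1)/U(k)` can be rotated to a map lying over any map `w` to the sphere
that is nowhere antipodal to the projection of `v`. -/
theorem SOmodU.exists_homotopicRel_proj_eq (v : C(X, SOmodU k)) (w : C(X, Fin (2 * k + 1) → ℝ))
    (hw : ∀ x, w x ⬝ᵥ w x = 1) (hvw : ∀ x, (v x).proj + w x ≠ 0) :
    ∃ v' : C(X, SOmodU k), (∀ x, (v' x).proj = w x) ∧
      ∀ S : Set X, (∀ x ∈ S, (v x).proj = w x) → v.HomotopicRel v' S := by
  have hu₀ : ∀ x, (v x).proj ≠ 0 := fun x h => by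
    have := (v x).proj_dotProduct_proj
    simp [h] at this
  have hline : ∀ p : I × X, (v p.2).proj + (p.1 : ℝ) • w p.2 ≠ 0 := fun ⟨t, x⟩ h => by
    have hu : (v x).proj = -((t : ℝ) • w x) := eq_neg_of_add_eq_zero_left h
    have hsq := (v x).proj_dotProduct_proj
    rw [hu, neg_dotProduct_neg, smul_dotProduct, dotProduct_smul, hw] at hsq
    have ht : (t : ℝ) = 1 := by
      have := t.2.1
      simp only [smul_eq_mul, mul_one] at hsq
      nlinarith
    exact hvw x (by simpa [ht] using h)
  have hproj : Continuous fun p : I × X => (v p.2).proj :=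
    SOmodU.continuous_proj.comp (v.continuous.comp continuous_snd)
  let H : C(I × X, SOmodU k) :=
    { toFun := fun p => reflectionProduct _ _ (hline p) (hu₀ p.2) • v p.2
      continuous_toFun := (continuous_reflectionProduct (by fun_prop) hproj _ _).smul
        (v.continuous.comp continuous_snd) }
  let v' : C(X, SOmodU k) := H.comp ⟨fun x => (1, x), by fun_prop⟩
  have hfix : ∀ (t : I) x, ((t : ℝ) = 0 ∨ (v x).proj = w x) → H (t, x) = v x := fun t x h => by
    have hc : (v x).proj + (t : ℝ) • w x = (1 + t : ℝ) • (v x).proj := by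
      rcases h with h | h
      · simp [h]
      · rw [← h, add_smul, one_smul]
    have ht : (1 + t : ℝ) ≠ 0 := by have := t.2.1; positivity
    change reflectionProduct _ _ (hline (t, x)) (hu₀ x) • v x = v x
    rw [reflectionProduct_eq_one ht _ _ hc, SOmodU.one_smul_eq]
  refine ⟨v', fun x => ?_, fun S hS => ⟨⟨⟨H, fun x => hfix 0 x (Or.inl rfl), fun x => rfl⟩, ?_⟩⟩⟩
  · change (reflectionProduct _ _ (hline (1, x)) (hu₀ x) • v x).proj = w x
    rw [SOmodU.proj_smul]
    refine reflectionProduct_mulVec (v x).proj_dotProduct_proj (hw x) _ _ ?_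
    change (v x).proj + (1 : ℝ) • w x = _
    rw [one_smul]
  · exact fun t x hx => hfix t x (Or.inr (hS x hx))

end Pushing

section GeneralPosition

open Module

/-- Continuous maps from a compact subset of a normed space to `ℝ^m` can be perturbed off the
origin, if `C¹` images of that subset have Hausdorff dimension less than `m`. -/
theorem exists_continuousMap_near_ne_zero {X E : Type*} [TopologicalSpace X] [CompactSpace X]
    [NormedAddCommGroup E] [NormedSpace ℝ E] {ι : X → E} (hι : Continuous ι)
    (hι' : Function.Injective ι) {m : ℕ}
    (hdim : ∀ Q : E → Fin m → ℝ, ContDiff ℝ 1 Q → dimH (Q '' Set.range ι) < m)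
    (h : C(X, Fin m → ℝ)) {ε : ℝ} (hε : 0 < ε) :
    ∃ q : C(X, Fin m → ℝ), ∀ x, q x ≠ 0 ∧ ∀ i, |q x i - h x i| < ε := by
  let A : Subalgebra ℝ C(X, ℝ) :=
    { carrier := {f | ∃ F : E → ℝ, ContDiff ℝ 1 F ∧ ∀ x, f x = F (ι x)}
      mul_mem' := by
        rintro f g ⟨F, hF, hfF⟩ ⟨G, hG, hgG⟩
        exact ⟨fun y => F y * G y, hF.mul hG, fun x => by simp [hfF, hgG]⟩
      add_mem' := by
        rintro f g ⟨F, hF, hfF⟩ ⟨G, hG, hgG⟩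
        exact ⟨fun y => F y + G y, hF.add hG, fun x => by simp [hfF, hgG]⟩
      algebraMap_mem' := fun r => ⟨fun _ => r, contDiff_const, fun x => rfl⟩ }
  have hA : A.SeparatesPoints := fun x y hxy => by
    obtain ⟨φ, hφ⟩ := SeparatingDual.exists_separating_of_ne (R := ℝ) (hι'.ne hxy)
    exact ⟨_, ⟨⟨φ ∘ ι, φ.continuous.comp hι⟩, ⟨φ, φ.contDiff, fun _ => rfl⟩, rfl⟩, hφ⟩
  have happrox : ∀ i, ∃ F : E → ℝ, ContDiff ℝ 1 F ∧ ∀ x, |F (ι x) - h x i| < ε / 2 := fun i => by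
    obtain ⟨⟨g, F, hF, hgF⟩, hg⟩ :=
      ContinuousMap.exists_mem_subalgebra_near_continuous_of_separatesPoints A hA
        (fun x => h x i) (by fun_prop) (ε / 2) (half_pos hε)
    exact ⟨F, hF, fun x => by simpa [← hgF x] using hg x⟩
  choose F hF hFh using happrox
  have hQ : ContDiff ℝ 1 fun y i => F i y := contDiff_pi.2 hF
  have hdense := dense_compl_of_dimH_lt_finrank (E := Fin m → ℝ)
    (s := (fun y i => F i y) '' Set.range ι) (by simpa using hdim _ hQ)
  obtain ⟨c, hc, hcε⟩ := hdense.exists_dist_lt 0 (half_pos hε)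
  refine ⟨⟨fun x i => F i (ι x) - c i, ?_⟩, fun x => ⟨fun hx => hc ?_, fun i => ?_⟩⟩
  · exact continuous_pi fun i => ((hF i).continuous.comp hι).sub continuous_const
  · exact ⟨ι x, ⟨x, rfl⟩, funext fun i => sub_eq_zero.1 (congrFun hx i)⟩
  · have hci : |c i| < ε / 2 := by
      rw [dist_zero_left] at hcε
      exact (norm_le_pi_norm c i).trans_lt hcε
    have := hFh i x
    change |F i (ι x) - c i - h x i| < ε
    rw [abs_lt] at *
    constructor <;> linarith

/-- `C¹` images of a cylinder over the sphere `S^j` have Hausdorff dimension at most `j + 1`. -/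
theorem dimH_image_prod_sphere_lt {j m : ℕ} (hjm : j + 1 < m)
    {Q : ℝ × EuclideanSpace ℝ (Fin (j + 1)) → Fin m → ℝ} (hQ : ContDiff ℝ 1 Q) :
    dimH (Q '' (Set.univ ×ˢ Metric.sphere 0 1)) < m := by
  set v : EuclideanSpace ℝ (Fin (j + 1)) := EuclideanSpace.single 0 1
  have hv : ‖v‖ = 1 := by simp [v]
  have : Fact (finrank ℝ (EuclideanSpace ℝ (Fin (j + 1))) = j + 1) := ⟨by simp⟩
  have hrank : finrank ℝ (ℝ ∙ v)ᗮ = j :=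
    Submodule.finrank_orthogonal_span_singleton (n := j) fun h => by simp [h] at hv
  have hsub : Q '' (Set.univ ×ˢ Metric.sphere 0 1) ⊆
      Set.range (fun p : ℝ × (ℝ ∙ v)ᗮ => Q (p.1, stereoInvFunAux v p.2)) ∪
        Set.range fun t : ℝ => Q (t, v) := by
    rintro _ ⟨⟨t, x⟩, ⟨-, hx⟩, rfl⟩
    by_cases hxv : x = v
    · exact Or.inr ⟨t, by rw [hxv]⟩
    · refine Or.inl ⟨(t, stereoToFun v x), ?_⟩
      exact congrArg (fun y => Q (t, y))
        (congrArg Subtype.val (stereo_left_inv hv (x := ⟨x, hx⟩) hxv))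
  refine (dimH_mono hsub).trans_lt ?_
  rw [dimH_union, max_lt_iff]
  constructor
  · refine (ContDiff.dimH_range_le (hQ.comp (contDiff_fst.prodMk
      (contDiff_stereoInvFunAux.comp ((ℝ ∙ v)ᗮ.subtypeL.contDiff.comp contDiff_snd))))).trans_lt ?_
    rw [finrank_prod, hrank, finrank_self]
    exact_mod_cast (by omega : 1 + j < m)
  · refine (ContDiff.dimH_range_le (hQ.comp (contDiff_id.prodMk contDiff_const))).trans_lt ?_
    rw [finrank_self]
    exact_mod_cast (by omega : 1 < m)

/-- A map `u` to the sphere `S^m` from a space whose maps to `ℝ^m` can be perturbed off the origin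
is nowhere antipodal to some map `w` to the sphere that misses the south pole and agrees with `u`
wherever `u` is at the north pole. -/
theorem exists_unit_avoiding_south_pole {X : Type*} [TopologicalSpace X] {m : ℕ}
    (hX : ∀ (h : C(X, Fin m → ℝ)) (ε : ℝ), 0 < ε →
      ∃ q : C(X, Fin m → ℝ), ∀ x, q x ≠ 0 ∧ ∀ i, |q x i - h x i| < ε)
    (u : C(X, Fin (m + 1) → ℝ)) (hu : ∀ x, u x ⬝ᵥ u x = 1) :
    ∃ w : C(X, Fin (m + 1) → ℝ), (∀ x, w x ⬝ᵥ w x = 1) ∧ (∀ x, u x + w x ≠ 0) ∧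
      (∀ x, w x + Pi.single (Fin.last m) 1 ≠ 0) ∧
      ∀ x, u x = Pi.single (Fin.last m) 1 → w x = u x := by
  obtain ⟨q, hq⟩ := hX ⟨fun x i => u x i.castSucc, by fun_prop⟩ (1 / (2 * (m + 1))) (by positivity)
  simp only [ContinuousMap.coe_mk] at hq
  let s : C(X, ℝ) := ⟨fun x => max 0 (min 1 (-2 * u x (Fin.last m))), by fun_prop⟩
  have hs₀ : ∀ x, 0 ≤ s x := fun x => le_max_left _ _
  have hs₁ : ∀ x, s x ≤ 1 := fun x => max_le zero_le_one (min_le_left _ _)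
  have hs_nonneg : ∀ x, 0 ≤ u x (Fin.last m) → s x = 0 := fun x hx =>
    max_eq_left ((min_le_right _ _).trans (by linarith))
  have hs_le : ∀ x, u x (Fin.last m) ≤ -1 / 2 → s x = 1 := fun x hx => by
    change max 0 (min 1 _) = _
    rw [min_eq_left (by linarith), max_eq_right zero_le_one]
  let z : C(X, Fin (m + 1) → ℝ) :=
    ⟨fun x => u x + s x • Fin.snoc (α := fun _ => ℝ) (fun i => q x i - u x i.castSucc) 0,
      u.continuous.add (s.continuous.smul
        (Continuous.finSnoc (by fun_prop) continuous_const))⟩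
  have hz_castSucc : ∀ x (i : Fin m),
      z x i.castSucc = u x i.castSucc + s x * (q x i - u x i.castSucc) := fun x i => by simp [z]
  have hz_last : ∀ x, z x (Fin.last m) = u x (Fin.last m) := fun x => by simp [z]
  have hu_abs : ∀ x i, |u x i| ≤ 1 := fun x i => by
    rw [← sq_le_one_iff_abs_le_one, ← hu x, sq]
    exact Finset.single_le_sum (f := fun i => u x i * u x i) (fun i _ => mul_self_nonneg _)
      (Finset.mem_univ i)
  have hzu : ∀ x, 1 / 2 ≤ u x ⬝ᵥ z x := fun x => by
    have hsum : u x ⬝ᵥ z x = 1 + s x * ∑ i : Fin m, u x i.castSucc * (q x i - u x i.castSucc) := by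
      rw [← hu x]
      simp only [dotProduct, Fin.sum_univ_castSucc, hz_castSucc, hz_last, Finset.mul_sum]
      rw [add_right_comm, ← Finset.sum_add_distrib]
      congr 1
      exact Finset.sum_congr rfl fun i _ => by ring
    have hle : |∑ i : Fin m, u x i.castSucc * (q x i - u x i.castSucc)| ≤ 1 / 2 := by
      calc _ ≤ ∑ i : Fin m, |u x i.castSucc * (q x i - u x i.castSucc)| :=
            Finset.abs_sum_le_sum_abs _ _
        _ ≤ ∑ _i : Fin m, 1 / (2 * ((m : ℝ) + 1)) := Finset.sum_le_sum fun i _ => by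
            rw [abs_mul]
            exact (mul_le_of_le_one_left (abs_nonneg _) (hu_abs x _)).trans ((hq x).2 i).le
        _ ≤ 1 / 2 := by
            rw [Finset.sum_const, Finset.card_univ, Fintype.card_fin, nsmul_eq_mul, mul_one_div,
              div_le_div_iff₀ (by positivity) two_pos]
            linarith
    have hbound : |s x * ∑ i : Fin m, u x i.castSucc * (q x i - u x i.castSucc)| ≤ 1 / 2 := by
      rw [abs_mul, abs_of_nonneg (hs₀ x)]
      exact (mul_le_of_le_one_left (abs_nonneg _) (hs₁ x)).trans hle
    rw [hsum]
    linarith [neg_le_of_abs_le hbound]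
  have hz_pos : ∀ x, 0 < z x ⬝ᵥ z x := fun x => by
    have hnonneg : 0 ≤ z x ⬝ᵥ z x := Finset.sum_nonneg fun i _ => mul_self_nonneg _
    refine hnonneg.lt_of_ne' fun h => ?_
    have := hzu x
    rw [dotProduct_self_eq_zero.1 h, dotProduct_zero] at this
    norm_num at this
  have hr : ∀ x, 0 < √(z x ⬝ᵥ z x) := fun x => Real.sqrt_pos.2 (hz_pos x)
  refine ⟨⟨fun x => (√(z x ⬝ᵥ z x))⁻¹ • z x, ?_⟩, fun x => ?_, fun x hx => ?_, fun x hx => ?_,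
    fun x hx => ?_⟩
  · exact (Continuous.inv₀ (by fun_prop) fun x => (hr x).ne').smul z.continuous
  · change ((√(z x ⬝ᵥ z x))⁻¹ • z x) ⬝ᵥ ((√(z x ⬝ᵥ z x))⁻¹ • z x) = 1
    rw [smul_dotProduct, dotProduct_smul, smul_eq_mul, smul_eq_mul, ← mul_assoc, ← mul_inv,
      Real.mul_self_sqrt (hz_pos x).le, inv_mul_cancel₀ (hz_pos x).ne']
  · have h : u x ⬝ᵥ (u x + (√(z x ⬝ᵥ z x))⁻¹ • z x) = 0 := by
      rw [← dotProduct_zero (u x)]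
      exact congrArg _ hx
    rw [dotProduct_add, hu, dotProduct_smul, smul_eq_mul] at h
    have : 0 < (√(z x ⬝ᵥ z x))⁻¹ * (u x ⬝ᵥ z x) :=
      mul_pos (inv_pos.2 (hr x)) (by linarith [hzu x])
    linarith
  · have hcastSucc : ∀ i : Fin m, z x i.castSucc = 0 := fun i => by
      have := congrFun hx i.castSucc
      simpa [(Fin.castSucc_lt_last i).ne, (hr x).ne'] using this
    have hlast : (√(z x ⬝ᵥ z x))⁻¹ * u x (Fin.last m) + 1 = 0 := by
      have := congrFun hx (Fin.last m)
      simpa [hz_last] using this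
    rcases le_or_gt 0 (u x (Fin.last m)) with hpos | hneg
    · have := mul_nonneg (inv_pos.2 (hr x)).le hpos
      linarith
    rcases le_or_gt (u x (Fin.last m)) (-1 / 2) with hlow | hmid
    · refine (hq x).1 (funext fun i => ?_)
      have := hcastSucc i
      rw [hz_castSucc, hs_le x hlow] at this
      change q x i = 0
      linarith
    · have := hzu x
      rw [dotProduct, Fin.sum_univ_castSucc, hz_last] at this
      simp only [hcastSucc, mul_zero, Finset.sum_const_zero, zero_add] at this
      nlinarith
  · have hzx : z x = u x := by
      have : s x = 0 := hs_nonneg x (by rw [hx, Pi.single_eq_same]; exact zero_le_one)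
      change u x + s x • _ = u x
      rw [this, zero_smul, add_zero]
    change (√(z x ⬝ᵥ z x))⁻¹ • z x = u x
    rw [hzx, hu, Real.sqrt_one, inv_one, one_smul]

end GeneralPosition

section Inclusion

open unitInterval

variable {k : ℕ}

theorem SOmodU.exists_homotopicRel_incl {X : Type*} [TopologicalSpace X]
    (hX : ∀ (h : C(X, Fin (2 * (k + 1)) → ℝ)) (ε : ℝ), 0 < ε →
      ∃ q : C(X, Fin (2 * (k + 1)) → ℝ), ∀ x, q x ≠ 0 ∧ ∀ i, |q x i - h x i| < ε)
    (H : C(X, SOmodU (k + 1))) :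
    ∃ L : C(X, SOmodU k),
      H.HomotopicRel (SOmodU.incl.comp L) {x | H x ∈ Set.range (SOmodU.incl (k := k))} := by
  obtain ⟨w, hw, huw, hw_south, hw_north⟩ := exists_unit_avoiding_south_pole hX
    ⟨fun x => (H x).proj, SOmodU.continuous_proj.comp H.continuous⟩
    fun x => (H x).proj_dotProduct_proj
  obtain ⟨H₁, hH₁, hHH₁⟩ := SOmodU.exists_homotopicRel_proj_eq H w hw huw
  obtain ⟨H₂, hH₂, hHH₂⟩ := SOmodU.exists_homotopicRel_proj_eq H₁
    (ContinuousMap.const X (pole (k + 1))) (fun x => by simp [pole])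
    (fun x => by rw [hH₁]; exact hw_south x)
  choose l hl using fun x => SOmodU.mem_range_incl_iff.2 (hH₂ x)
  have hlc : Continuous l := by
    rw [SOmodU.isEmbedding_incl.continuous_iff]
    exact H₂.continuous.congr fun x => (hl x).symm
  refine ⟨⟨l, hlc⟩, ?_⟩
  have hlH₂ : SOmodU.incl.comp ⟨l, hlc⟩ = H₂ := ContinuousMap.ext hl
  rw [hlH₂]
  refine (hHH₁ _ fun x hx => ?_).trans (hHH₂ _ fun x hx => ?_)
  · exact (hw_north x (SOmodU.mem_range_incl_iff.1 hx)).symm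
  · rw [hH₁]
    exact (hw_north x (SOmodU.mem_range_incl_iff.1 hx)).trans (SOmodU.mem_range_incl_iff.1 hx)

theorem SOmodU.exists_homotopicRel_incl_of_sphere {j : ℕ} (hj : j < 2 * k + 1)
    (H : C(I × Metric.sphere (0 : EuclideanSpace ℝ (Fin (j + 1))) 1, SOmodU (k + 1))) :
    ∃ L : C(I × Metric.sphere (0 : EuclideanSpace ℝ (Fin (j + 1))) 1, SOmodU k),
      H.HomotopicRel (SOmodU.incl.comp L) {x | H x ∈ Set.range (SOmodU.incl (k := k))} := by
  refine SOmodU.exists_homotopicRel_incl (fun h ε hε => ?_) H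
  refine exists_continuousMap_near_ne_zero (ι := Prod.map Subtype.val Subtype.val)
    (continuous_subtype_val.prodMap continuous_subtype_val)
    (Subtype.val_injective.prodMap Subtype.val_injective) (fun Q hQ => ?_) h hε
  refine (dimH_mono (Set.image_mono ?_)).trans_lt
    (dimH_image_prod_sphere_lt (by omega : j + 1 < 2 * (k + 1)) hQ)
  rintro _ ⟨x, rfl⟩
  exact ⟨Set.mem_univ _, x.2.2⟩

end Inclusion

/-- writing `n = k + 1`, for `j < 2k + 1 = 2n − 1` the natural inclusion
`SO(2n−1)/U(n−1) → SO(2n+1)/U(n)` (induced by the block inclusions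
`SO(2k+1) ⊂ SO(2k+3)`, `U(k) ⊂ U(k+1)`) induces an isomorphism on `π_j`: there is a
continuous map between the homogeneous spaces, commuting with the projections and the
block inclusion, which is bijective (in the rel-basepoint homotopy category) on based maps
from the `j`-sphere. -/
theorem stmt_10 (k j : ℕ) (hj : j < 2 * k + 1)
    (S : Set (EuclideanSpace ℝ (Fin (j + 1))))
    (hS : S = Metric.sphere (0 : EuclideanSpace ℝ (Fin (j + 1))) 1)
    (s₀ : S) :
    ∃ f : C(SOmodU k, SOmodU (k + 1)),
      -- `f` is induced by the block inclusion `SO(2k+1) → SO(2k+3)`: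
      (∀ (g : SOgrp (2 * k + 1)) (g' : SOgrp (2 * (k + 1) + 1)),
          ((g' : ↥(Matrix.orthogonalGroup (Fin (2 * (k + 1) + 1)) ℝ)) :
              Matrix (Fin (2 * (k + 1) + 1)) (Fin (2 * (k + 1) + 1)) ℝ)
            = blockIncl ((g : ↥(Matrix.orthogonalGroup (Fin (2 * k + 1)) ℝ)) :
              Matrix (Fin (2 * k + 1)) (Fin (2 * k + 1)) ℝ) →
          f (QuotientGroup.mk g) = QuotientGroup.mk g') ∧
      -- `f` maps the basepoint to the basepoint:
      f (QuotientGroup.mk 1) = QuotientGroup.mk 1 ∧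
      -- surjectivity of `π_j (f)`:
      (∀ v : C(S, SOmodU (k + 1)), v s₀ = QuotientGroup.mk 1 →
        ∃ u : C(S, SOmodU k), u s₀ = QuotientGroup.mk 1 ∧
          ContinuousMap.HomotopicRel (f.comp u) v {s₀}) ∧
      -- injectivity of `π_j (f)`:
      (∀ u₁ u₂ : C(S, SOmodU k), u₁ s₀ = QuotientGroup.mk 1 → u₂ s₀ = QuotientGroup.mk 1 →
        ContinuousMap.HomotopicRel (f.comp u₁) (f.comp u₂) {s₀} →
        ContinuousMap.HomotopicRel u₁ u₂ {s₀}) := by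
  subst hS
  refine ⟨SOmodU.incl, fun g g' hg => ?_, ?_, fun v hv => ?_, fun u₁ u₂ hu₁ hu₂ hu => ?_⟩
  · have : g' = soIncl g := soMatrix_injective hg
    rw [this]
    exact SOmodU.incl_mk g
  · exact (SOmodU.incl_mk 1).trans (by rw [soIncl_one]; rfl)
  · obtain ⟨L, hL⟩ := SOmodU.exists_homotopicRel_incl_of_sphere hj (v.comp ContinuousMap.snd)
    have hs₀ : v s₀ = SOmodU.incl (SOmodU.mk 1) := by
      rw [hv, SOmodU.incl_mk, soIncl_one]
      rfl
    have hLs₀ := hL.fst_eq_snd (x := (0, s₀)) ⟨_, hs₀.symm⟩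
    obtain ⟨K⟩ := hL
    refine ⟨L.comp ⟨fun x => (0, x), by fun_prop⟩,
      SOmodU.incl_injective (hLs₀.symm.trans hs₀), ?_⟩
    refine ContinuousMap.HomotopicRel.symm ⟨⟨⟨⟨fun p => K (p.1, (0, p.2)), by fun_prop⟩,
      fun x => K.apply_zero _, fun x => K.apply_one _⟩, ?_⟩⟩
    rintro t x rfl
    exact K.eq_fst t ⟨_, hs₀.symm⟩
  · obtain ⟨K⟩ := hu
    obtain ⟨L, hL⟩ := SOmodU.exists_homotopicRel_incl_of_sphere hj K.toContinuousMap
    have hlift : ∀ p y, K p = SOmodU.incl y → L p = y := fun p y hp =>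
      SOmodU.incl_injective ((hL.fst_eq_snd ⟨y, hp.symm⟩).symm.trans hp)
    refine ⟨⟨⟨L, fun x => hlift _ _ (K.apply_zero x), fun x => hlift _ _ (K.apply_one x)⟩, ?_⟩⟩
    rintro t x rfl
    exact hlift _ _ (K.eq_fst t rfl)
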